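/- Assume condition (A)₀ and condition (K). Then there exist constants C > 0 and c > 0 such that for every r ≥ 0, every ω ∈ S^{n−1}, and every differentiable function û : [0,∞) → ℂᵐ satisfying A⁰û′(t) + i r A(ω) û(t) + L û(t) = 0 for all t ≥ 0, one has |û(t)| ≤ C e^{−c ρ(r) t} |û(0)| for all t ≥ 0. -/

import Mathlib

open Matrix BigOperators Finset

noncomputable section

/-- Complexification of a real matrix. -/
def cmap {a b : ℕ} (X : Matrix (Fin a) (Fin b) ℝ) : Matrix (Fin a) (Fin b) ℂ :=
  X.map (fun x => (x : ℂ))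

/-- Real part of the standard Hermitian inner product `⟨x, y⟩ = ∑ xᵢ conj yᵢ` on `ℂᵐ`. -/
def reIP {m : ℕ} (x y : Fin m → ℂ) : ℝ := (∑ i, x i * (starRingEnd ℂ) (y i)).re

/-- Symmetric part `X₁ = (X + Xᵀ)/2` of a real square matrix. -/
def symP {m : ℕ} (X : Matrix (Fin m) (Fin m) ℝ) : Matrix (Fin m) (Fin m) ℝ :=
  (2⁻¹ : ℝ) • (X + Xᵀ)

/-- Kernel of (the complexification of) a real matrix, as a subset of `ℂᵐ`. -/
def kerC {m : ℕ} (L : Matrix (Fin m) (Fin m) ℝ) : Set (Fin m → ℂ) :=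
  {z | (cmap L).mulVec z = 0}

/-- Euclidean norm on `ℂᵐ`. -/
def cnrm {m : ℕ} (z : Fin m → ℂ) : ℝ := Real.sqrt (∑ i, Complex.normSq (z i))

lemma reIP_eq {m : ℕ} (x y : Fin m → ℂ) :
    reIP x y = ∑ i, ((x i).re * (y i).re + (x i).im * (y i).im) := by
  simp [reIP, Complex.mul_re]

lemma reIP_comm {m : ℕ} (x y : Fin m → ℂ) : reIP x y = reIP y x := by
  simp only [reIP_eq]; refine Finset.sum_congr rfl fun i _ => by ring

lemma reIP_add_left {m : ℕ} (x y z : Fin m → ℂ) : reIP (x + y) z = reIP x z + reIP y z := by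
  simp only [reIP_eq, ← Finset.sum_add_distrib]
  refine Finset.sum_congr rfl fun i _ => by simp; ring

lemma reIP_add_right {m : ℕ} (x y z : Fin m → ℂ) : reIP x (y + z) = reIP x y + reIP x z := by
  rw [reIP_comm, reIP_add_left, reIP_comm y, reIP_comm z]

lemma reIP_smul_left {m : ℕ} (c : ℝ) (x z : Fin m → ℂ) :
    reIP ((c : ℂ) • x) z = c * reIP x z := by
  simp only [reIP_eq, Finset.mul_sum]
  refine Finset.sum_congr rfl fun i _ => by simp; ring

lemma reIP_smul_right {m : ℕ} (c : ℝ) (x z : Fin m → ℂ) :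
    reIP x ((c : ℂ) • z) = c * reIP x z := by
  rw [reIP_comm, reIP_smul_left, reIP_comm]

lemma reIP_neg_left {m : ℕ} (x z : Fin m → ℂ) : reIP (-x) z = - reIP x z := by
  have := reIP_smul_left (-1) x z
  simpa using this

lemma reIP_neg_right {m : ℕ} (x z : Fin m → ℂ) : reIP x (-z) = - reIP x z := by
  rw [reIP_comm, reIP_neg_left, reIP_comm]

lemma reIP_I {m : ℕ} (x z : Fin m → ℂ) :
    reIP (Complex.I • x) z = - reIP x (Complex.I • z) := by
  simp only [reIP_eq, ← Finset.sum_neg_distrib]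
  refine Finset.sum_congr rfl fun i _ => by simp

lemma cmap_mul {m : ℕ} (X Y : Matrix (Fin m) (Fin m) ℝ) : cmap (X * Y) = cmap X * cmap Y := by
  ext i j; simp [cmap, Matrix.mul_apply]

lemma reIP_adj {m : ℕ} (X : Matrix (Fin m) (Fin m) ℝ) (z w : Fin m → ℂ) :
    reIP (cmap X *ᵥ z) w = reIP z (cmap Xᵀ *ᵥ w) := by
  simp only [reIP, cmap, mulVec, dotProduct, map_sum, Finset.sum_mul, Finset.mul_sum]
  rw [Finset.sum_comm]
  congr 1
  refine Finset.sum_congr rfl fun i _ => Finset.sum_congr rfl fun j _ => ?_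
  simp; ring

def nsq {m : ℕ} (z : Fin m → ℂ) : ℝ := ∑ i, Complex.normSq (z i)

lemma nsq_eq {m : ℕ} (z : Fin m → ℂ) : nsq z = reIP z z := by
  simp [nsq, reIP_eq, Complex.normSq_apply]

lemma nsq_nonneg {m : ℕ} (z : Fin m → ℂ) : 0 ≤ nsq z :=
  Finset.sum_nonneg fun i _ => Complex.normSq_nonneg _

lemma nsq_zero_iff {m : ℕ} (z : Fin m → ℂ) : nsq z = 0 ↔ z = 0 := by
  rw [nsq, Finset.sum_eq_zero_iff_of_nonneg (fun i _ => Complex.normSq_nonneg _)]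
  simp [funext_iff]

lemma reIP_symP {m : ℕ} (X : Matrix (Fin m) (Fin m) ℝ) (z : Fin m → ℂ) :
    reIP (cmap (symP X) *ᵥ z) z = reIP (cmap X *ᵥ z) z := by
  have h : cmap (symP X) = ((2⁻¹ : ℝ) : ℂ) • (cmap X + cmap Xᵀ) := by
    ext i j; simp [cmap, symP]; ring
  rw [h, smul_mulVec, reIP_smul_left, add_mulVec, reIP_add_left, reIP_adj Xᵀ, transpose_transpose,
    reIP_comm z]
  ring

lemma cs {m : ℕ} (L : Matrix (Fin m) (Fin m) ℝ) (hLsym : Lᵀ = L)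
    (hLnn : ∀ z : Fin m → ℂ, 0 ≤ reIP ((cmap L).mulVec z) z) (z w : Fin m → ℂ) :
    reIP (cmap L *ᵥ z) w ^ 2 ≤ reIP (cmap L *ᵥ z) z * reIP (cmap L *ᵥ w) w := by
  have key : ∀ s : ℝ, 0 ≤ reIP (cmap L *ᵥ w) w * (s * s) + (2 * reIP (cmap L *ᵥ z) w) * s
      + reIP (cmap L *ᵥ z) z := by
    intro s
    have := hLnn (z + (s : ℂ) • w)
    rw [mulVec_add, mulVec_smul] at this
    simp only [reIP_add_left, reIP_add_right, reIP_smul_left, reIP_smul_right] at this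
    have h2 : reIP (cmap L *ᵥ w) z = reIP (cmap L *ᵥ z) w := by
      rw [reIP_adj, hLsym, reIP_comm]
    rw [h2] at this
    linarith
  have := discrim_le_zero key
  rw [discrim] at this
  nlinarith

lemma ker_of_zero {m : ℕ} (L : Matrix (Fin m) (Fin m) ℝ) (hLsym : Lᵀ = L)
    (hLnn : ∀ z : Fin m → ℂ, 0 ≤ reIP ((cmap L).mulVec z) z) (z : Fin m → ℂ)
    (hz : reIP (cmap L *ᵥ z) z = 0) : z ∈ kerC L := by
  have := cs L hLsym hLnn z (cmap L *ᵥ z)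
  rw [hz, zero_mul, ← nsq_eq] at this
  have h0 : nsq (cmap L *ᵥ z) = 0 := by nlinarith [sq_nonneg (nsq (cmap L *ᵥ z))]
  exact (nsq_zero_iff _).1 h0

def SS (n m : ℕ) : Set ((Fin n → ℝ) × (Fin m → ℂ)) :=
  {x | (∑ j, x.1 j ^ 2 = 1) ∧ nsq x.2 = 1}

lemma continuous_reIP {m : ℕ} {T : Type*} [TopologicalSpace T] {f g : T → Fin m → ℂ}
    (hf : Continuous f) (hg : Continuous g) : Continuous fun t => reIP (f t) (g t) := by
  simp only [reIP_eq]; fun_prop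

lemma SS_compact (n m : ℕ) : IsCompact (SS n m) := by
  apply Metric.isCompact_of_isClosed_isBounded
  · apply IsClosed.inter
    · exact isClosed_eq (by fun_prop) continuous_const
    · refine isClosed_eq ?_ continuous_const
      simp only [nsq_eq]
      exact continuous_reIP continuous_snd continuous_snd
  · refine (Metric.isBounded_closedBall (x := (0 : (Fin n → ℝ) × (Fin m → ℂ))) (r := 1)).subset ?_
    rintro ⟨ω, z⟩ ⟨h1, h2⟩
    simp only [mem_closedBall_zero_iff, Prod.norm_def, sup_le_iff] at *
    constructor
    · rw [pi_norm_le_iff_of_nonneg zero_le_one]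
      intro i
      have : ω i ^ 2 ≤ ∑ j, ω j ^ 2 :=
        Finset.single_le_sum (f := fun j => ω j ^ 2) (fun j _ => sq_nonneg _) (Finset.mem_univ i)
      rw [h1] at this
      rw [Real.norm_eq_abs]
      exact (sq_le_one_iff_abs_le_one _).1 this
    · rw [pi_norm_le_iff_of_nonneg zero_le_one]
      intro i
      have : Complex.normSq (z i) ≤ nsq z :=
        Finset.single_le_sum (f := fun j => Complex.normSq (z j))
          (fun j _ => Complex.normSq_nonneg _) (Finset.mem_univ i)
      rw [h2, Complex.normSq_eq_norm_sq] at this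
      have := (sq_le_one_iff_abs_le_one _).1 this
      rwa [abs_norm] at this

lemma homog {n m : ℕ} (F : (Fin n → ℝ) × (Fin m → ℂ) → ℝ) (κ : ℝ)
    (hF : ∀ ω z (c : ℝ), F (ω, (c : ℂ) • z) = c ^ 2 * F (ω, z))
    (h : ∀ x ∈ SS n m, κ ≤ F x) (ω : Fin n → ℝ) (hω : ∑ j, ω j ^ 2 = 1) (z : Fin m → ℂ) :
    κ * nsq z ≤ F (ω, z) := by
  by_cases hz : z = 0
  · subst hz
    have := hF ω 0 0
    simp at this
    rw [this, (nsq_zero_iff _).2 rfl]; simp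
  · have hs : 0 < nsq z := lt_of_le_of_ne (nsq_nonneg z) (fun h => hz ((nsq_zero_iff z).1 h.symm))
    have hsq : (√(nsq z))⁻¹ ^ 2 * nsq z = 1 := by
      rw [inv_pow, Real.sq_sqrt hs.le]; exact inv_mul_cancel₀ hs.ne'
    have hmem : (ω, (((√(nsq z))⁻¹ : ℝ) : ℂ) • z) ∈ SS n m := by
      refine ⟨hω, ?_⟩
      show nsq ((((√(nsq z))⁻¹ : ℝ) : ℂ) • z) = 1
      rw [nsq_eq, reIP_smul_left, reIP_smul_right, ← nsq_eq, ← hsq]; ring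
    have h3 := h _ hmem
    rw [hF] at h3
    have := mul_le_mul_of_nonneg_right h3 hs.le
    calc κ * nsq z ≤ _ := this
      _ = ((√(nsq z))⁻¹ ^ 2 * nsq z) * F (ω, z) := by ring
      _ = _ := by rw [hsq, one_mul]

lemma lower {n m : ℕ} (F : (Fin n → ℝ) × (Fin m → ℂ) → ℝ)
    (hF : ∀ ω z (c : ℝ), F (ω, (c : ℂ) • z) = c ^ 2 * F (ω, z)) (hc : Continuous F)
    (h : ∀ x ∈ SS n m, 0 < F x) : ∃ κ > 0, ∀ ω : Fin n → ℝ, (∑ j, ω j ^ 2 = 1) →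
      ∀ z : Fin m → ℂ, κ * nsq z ≤ F (ω, z) := by
  obtain ⟨κ, h0, h1⟩ := (SS_compact n m).exists_forall_le' hc.continuousOn h
  exact ⟨κ, h0, homog F κ hF h1⟩

lemma upper {n m : ℕ} (F : (Fin n → ℝ) × (Fin m → ℂ) → ℝ)
    (hF : ∀ ω z (c : ℝ), F (ω, (c : ℂ) • z) = c ^ 2 * F (ω, z)) (hc : Continuous F) :
    ∃ B > 0, ∀ ω : Fin n → ℝ, (∑ j, ω j ^ 2 = 1) →
      ∀ z : Fin m → ℂ, |F (ω, z)| ≤ B * nsq z := by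
  obtain ⟨B, hB⟩ := (SS_compact n m).exists_bound_of_continuousOn hc.continuousOn
  refine ⟨max B 1, by positivity, fun ω hω z => ?_⟩
  have hB' : ∀ x ∈ SS n m, |F x| ≤ max B 1 := fun x hx => (hB x hx).trans (le_max_left _ _)
  have h1 := homog F (-(max B 1)) hF (fun x hx => (abs_le.1 (hB' x hx)).1) ω hω z
  have h2 := homog (fun x => - F x) (-(max B 1)) (fun ω z c => by simp only [hF]; ring)
    (fun x hx => by have := (abs_le.1 (hB' x hx)).2; linarith) ω hω z
  rw [abs_le]; constructor <;> linarith

lemma combine {n m : ℕ} (p l : (Fin n → ℝ) × (Fin m → ℂ) → ℝ) (hp : Continuous p)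
    (hl : Continuous l) (hl0 : ∀ x, 0 ≤ l x) (h : ∀ x ∈ SS n m, l x = 0 → 0 < p x) :
    ∃ M : ℕ, ∀ x ∈ SS n m, 0 < p x + M * l x := by
  have := (SS_compact n m).elim_directed_cover (fun k : ℕ => {x | 0 < p x + k * l x})
    (fun k => isOpen_lt continuous_const (by fun_prop)) ?_ ?_
  · obtain ⟨M, hM⟩ := this
    exact ⟨M, fun x hx => hM hx⟩
  · intro x hx
    rw [Set.mem_iUnion]
    rcases (hl0 x).eq_or_lt with h0 | h0
    · exact ⟨0, by simpa using h x hx h0.symm⟩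
    · obtain ⟨k, hk⟩ := exists_nat_gt (-(p x) / l x)
      refine ⟨k, ?_⟩
      rw [div_lt_iff₀ h0] at hk
      show 0 < p x + k * l x
      linarith
  · apply Monotone.directed_le
    intro a b hab x hx
    have : (a : ℝ) * l x ≤ b * l x := mul_le_mul_of_nonneg_right (by exact_mod_cast hab) (hl0 x)
    have hx' : 0 < p x + a * l x := hx
    show 0 < p x + b * l x
    linarith

lemma deriv_form {m : ℕ} (X : Matrix (Fin m) (Fin m) ℂ) (u : ℝ → Fin m → ℂ) (v : Fin m → ℂ)
    (t : ℝ) (hu : HasDerivAt u v t) :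
    HasDerivAt (fun s => reIP (X *ᵥ u s) (u s)) (reIP (X *ᵥ v) (u t) + reIP (X *ᵥ u t) v) t := by
  have hui := hasDerivAt_pi.1 hu
  have h1 : ∀ i, HasDerivAt (fun s => (X *ᵥ u s) i) ((X *ᵥ v) i) t := by
    intro i
    simp only [mulVec, dotProduct]
    exact HasDerivAt.fun_sum fun j _ => (hui j).const_mul _
  have h2 : HasDerivAt (fun s => ∑ i, (X *ᵥ u s) i * (starRingEnd ℂ) (u s i))
      (∑ i, ((X *ᵥ v) i * (starRingEnd ℂ) (u t i) + (X *ᵥ u t) i * (starRingEnd ℂ) (v i))) t :=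
    HasDerivAt.fun_sum fun i _ => (h1 i).mul (hui i).star
  have h3 := Complex.reCLM.hasFDerivAt.comp_hasDerivAt t h2
  rw [Finset.sum_add_distrib] at h3
  simpa [reIP, Function.comp_def] using h3

lemma gronwall {V V' : ℝ → ℝ} {k : ℝ} (hc : ContinuousOn V (Set.Ici 0))
    (hd : ∀ t, 0 < t → HasDerivAt V (V' t) t) (hV : ∀ t, 0 < t → V' t ≤ - k * V t)
    (t : ℝ) (ht : 0 ≤ t) : V t ≤ Real.exp (-(k * t)) * V 0 := by
  have hD : ∀ t, 0 < t → HasDerivAt (fun s => V s * Real.exp (k * s))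
      (V' t * Real.exp (k * t) + V t * (Real.exp (k * t) * (k * 1))) t := fun t ht =>
    (hd t ht).mul ((hasDerivAt_id t).const_mul k).exp
  have anti : AntitoneOn (fun s => V s * Real.exp (k * s)) (Set.Ici 0) := by
    apply antitoneOn_of_deriv_nonpos (convex_Ici 0)
    · exact hc.mul (by fun_prop)
    · intro x hx
      rw [interior_Ici] at hx
      exact (hD x hx).differentiableAt.differentiableWithinAt
    · intro x hx
      rw [interior_Ici] at hx
      rw [(hD x hx).deriv]
      have := hV x hx
      nlinarith [Real.exp_pos (k * x)]
  have := anti (Set.mem_Ici.2 le_rfl) (Set.mem_Ici.2 ht) ht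
  simp only [mul_zero, Real.exp_zero, mul_one] at this
  rw [Real.exp_neg, inv_mul_eq_div, le_div_iff₀ (Real.exp_pos _)]
  exact this

lemma form_homog {m : ℕ} (X : Matrix (Fin m) (Fin m) ℂ) (z : Fin m → ℂ) (c : ℝ) :
    reIP (X *ᵥ ((c : ℂ) • z)) ((c : ℂ) • z) = c ^ 2 * reIP (X *ᵥ z) z := by
  rw [mulVec_smul, reIP_smul_left, reIP_smul_right]; ring

lemma continuous_cmap {m : ℕ} {T : Type*} [TopologicalSpace T] {f : T → Matrix (Fin m) (Fin m) ℝ}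
    (hf : Continuous f) : Continuous fun t => cmap (f t) :=
  hf.matrix_map Complex.continuous_ofReal

lemma arith {s l p g h q0 r δ M κ B e0 : ℝ} (hs : 0 ≤ s) (hl : 0 ≤ l) (hκ : 0 < κ) (hB : 0 < B)
    (hδ : 0 < δ) (hδ1 : δ ≤ 1) (hM : 0 ≤ M) (hδ2 : δ * B ≤ e0 / 2)
    (hδ3 : δ * (2 * M + B / κ) ≤ 2) (hr : 0 ≤ r)
    (hp : κ * s ≤ p + M * l) (hg : g ^ 2 ≤ l * (B * s)) (hh : |h| ≤ B * s)
    (hq : e0 * s ≤ q0) (hq' : q0 ≤ B * s) :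
    e0 / 2 * s ≤ q0 - δ * (r / (1 + r ^ 2)) * h ∧ q0 - δ * (r / (1 + r ^ 2)) * h ≤ 2 * B * s ∧
    -2 * l - δ * (r / (1 + r ^ 2)) * (2 * r * p - 2 * g) ≤
      - (δ * κ / (2 * B) * (r ^ 2 / (1 + r ^ 2))) * (q0 - δ * (r / (1 + r ^ 2)) * h) := by
  have hden : 0 < 1 + r ^ 2 := by positivity
  set a := r / (1 + r ^ 2) with ha
  set ρ := r ^ 2 / (1 + r ^ 2) with hρ
  have har : a * r = ρ := by rw [ha, hρ]; ring
  have ha0 : 0 ≤ a := by positivity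
  have hρ0 : 0 ≤ ρ := by positivity
  have hρ1 : ρ ≤ 1 := by rw [hρ, div_le_one hden]; linarith
  have ha1 : a ≤ 1 := by rw [ha, div_le_one hden]; nlinarith [sq_nonneg (r - 1)]
  have haρ : a ^ 2 ≤ ρ := by
    have : a ^ 2 = ρ * (1 / (1 + r ^ 2)) := by rw [ha, hρ]; ring
    rw [this]
    have h1 : 1 / (1 + r ^ 2) ≤ 1 := by rw [div_le_one hden]; nlinarith
    nlinarith
  have hah : |δ * a * h| ≤ δ * (B * s) := by
    rw [abs_mul, abs_of_nonneg (by positivity : 0 ≤ δ * a)]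
    have : δ * a ≤ δ := by nlinarith
    exact mul_le_mul this hh (abs_nonneg _) hδ.le
  obtain ⟨hah1, hah2⟩ := abs_le.1 hah
  have hup : q0 - δ * a * h ≤ 2 * B * s := by
    have : δ * (B * s) ≤ 1 * (B * s) := mul_le_mul_of_nonneg_right hδ1 (by positivity)
    linarith
  have hlo : e0 / 2 * s ≤ q0 - δ * a * h := by
    have : δ * B * s ≤ e0 / 2 * s := mul_le_mul_of_nonneg_right hδ2 hs
    linarith
  refine ⟨hlo, hup, ?_⟩
  have hyoung : 2 * a * g ≤ κ * ρ * s + B / κ * l := by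
    have h0 : 0 ≤ κ * ρ * s + B / κ * l := by positivity
    have h1 : (2 * a * g) ^ 2 ≤ (κ * ρ * s + B / κ * l) ^ 2 := by
      have e1 : a ^ 2 * g ^ 2 ≤ ρ * (l * (B * s)) :=
        mul_le_mul haρ hg (sq_nonneg _) hρ0
      have e2 : (κ * ρ * s) * (B / κ * l) = ρ * (l * (B * s)) := by field_simp
      nlinarith [sq_nonneg (κ * ρ * s - B / κ * l)]
    exact (le_abs_self _).trans (abs_le_of_sq_le_sq h1 h0)
  have hmain : -2 * l - δ * a * (2 * r * p - 2 * g) ≤ - (δ * κ * ρ * s) := by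
    have e1 : δ * a * (2 * r * p - 2 * g) = 2 * δ * ρ * p - δ * (2 * a * g) := by
      rw [← har]; ring
    have e2 : δ * (2 * a * g) ≤ δ * (κ * ρ * s + B / κ * l) := mul_le_mul_of_nonneg_left hyoung hδ.le
    have e3 : 2 * δ * ρ * (κ * s) ≤ 2 * δ * ρ * (p + M * l) :=
      mul_le_mul_of_nonneg_left hp (by positivity)
    have e4 : ρ * (2 * δ * M * l) ≤ 1 * (2 * δ * M * l) :=
      mul_le_mul_of_nonneg_right hρ1 (by positivity)
    have e5 : δ * (2 * M + B / κ) * l ≤ 2 * l := mul_le_mul_of_nonneg_right hδ3 hl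
    rw [e1]
    nlinarith
  refine hmain.trans ?_
  have e1 : δ * κ / (2 * B) * ρ * (q0 - δ * a * h) ≤ δ * κ / (2 * B) * ρ * (2 * B * s) :=
    mul_le_mul_of_nonneg_left hup (by positivity)
  have e2 : δ * κ / (2 * B) * ρ * (2 * B * s) = δ * κ * ρ * s := by field_simp
  linarith

lemma energy1 {m : ℕ} (A0 Aω L : Matrix (Fin m) (Fin m) ℝ) (hA0 : A0ᵀ = A0) (hA : Aωᵀ = Aω)
    (r : ℝ) (u v : Fin m → ℂ)
    (he : cmap A0 *ᵥ v + ((r : ℂ) * Complex.I) • cmap Aω *ᵥ u + cmap L *ᵥ u = 0) :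
    reIP (cmap A0 *ᵥ v) u + reIP (cmap A0 *ᵥ u) v = -2 * reIP (cmap L *ᵥ u) u := by
  have h1 : reIP (cmap A0 *ᵥ u) v = reIP (cmap A0 *ᵥ v) u := by
    rw [reIP_adj, hA0, reIP_comm]
  have h2 : reIP (Complex.I • cmap Aω *ᵥ u) u = 0 := by
    have : reIP (Complex.I • cmap Aω *ᵥ u) u = - reIP (Complex.I • cmap Aω *ᵥ u) u := by
      conv_lhs => rw [reIP_I, reIP_adj, hA, mulVec_smul, reIP_comm]
    linarith
  have h3 := congrArg (fun x => reIP x u) he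
  simp only [reIP_add_left, mul_smul, reIP_smul_left, h2] at h3
  have h4 : reIP (0 : Fin m → ℂ) u = 0 := by simp [reIP]
  rw [h1]; linarith

lemma energy2 {m : ℕ} (A0 Aω L K : Matrix (Fin m) (Fin m) ℝ) (hK : (K * A0)ᵀ = -(K * A0))
    (r : ℝ) (u v : Fin m → ℂ)
    (he : cmap A0 *ᵥ v + ((r : ℂ) * Complex.I) • cmap Aω *ᵥ u + cmap L *ᵥ u = 0) :
    reIP ((Complex.I • cmap (K * A0)) *ᵥ v) u + reIP ((Complex.I • cmap (K * A0)) *ᵥ u) v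
      = 2 * r * reIP (cmap (K * Aω) *ᵥ u) u - 2 * reIP (cmap L *ᵥ u) (-(Complex.I • cmap Kᵀ *ᵥ u)) := by
  have hneg : cmap (-(K * A0)) = - cmap (K * A0) := by ext i j; simp [cmap]
  have h1 : reIP ((Complex.I • cmap (K * A0)) *ᵥ u) v
      = reIP ((Complex.I • cmap (K * A0)) *ᵥ v) u := by
    rw [smul_mulVec, smul_mulVec, reIP_I, reIP_adj, hK, hneg, neg_mulVec, reIP_neg_right,
      mulVec_smul, reIP_comm, neg_neg]
  have h2 : reIP (cmap L *ᵥ u) (-(Complex.I • cmap Kᵀ *ᵥ u))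
      = reIP (Complex.I • cmap (K * L) *ᵥ u) u := by
    rw [reIP_I, reIP_neg_right, cmap_mul, ← mulVec_mulVec, reIP_adj K, mulVec_smul]
  have hv : cmap A0 *ᵥ v = -(((r : ℂ) * Complex.I) • cmap Aω *ᵥ u) - cmap L *ᵥ u := by
    rw [← sub_eq_zero, ← he]; abel
  have h3 : (Complex.I • cmap (K * A0)) *ᵥ v
      = (r : ℂ) • cmap (K * Aω) *ᵥ u + -(Complex.I • cmap (K * L) *ᵥ u) := by
    rw [smul_mulVec, cmap_mul, ← mulVec_mulVec, hv, mulVec_sub, mulVec_neg, mulVec_smul,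
      mulVec_mulVec, mulVec_mulVec, ← cmap_mul, ← cmap_mul, smul_sub, smul_neg, smul_smul]
    rw [show Complex.I * ((r : ℂ) * Complex.I) = -(r : ℂ) by
      rw [mul_left_comm, Complex.I_mul_I]; ring]
    rw [neg_smul, neg_neg, sub_eq_add_neg]
  rw [h1, h2, h3, reIP_add_left, reIP_neg_left, reIP_smul_left]
  ring

set_option maxHeartbeats 400000 in
/-- **Theorem 1.1 (decay property of the standard type, pointwise estimate).**
Under conditions (A)₀ and (K), solutions of `A⁰û′ + i r A(ω) û + L û = 0` satisfy
`|û(t)| ≤ C e^{−c ρ(r) t} |û(0)|` with `ρ(r) = r²/(1+r²)`. -/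
theorem decay_standard_symmetric
    (m n : ℕ) (hm : 1 ≤ m) (hn : 1 ≤ n)
    (A0 : Matrix (Fin m) (Fin m) ℝ) (A : Fin n → Matrix (Fin m) (Fin m) ℝ)
    (L : Matrix (Fin m) (Fin m) ℝ)
    -- condition (A)₀
    (hA0sym : A0ᵀ = A0) (hAsym : ∀ j, (A j)ᵀ = A j) (hLsym : Lᵀ = L)
    (hA0pos : ∀ z : Fin m → ℂ, z ≠ 0 → 0 < reIP ((cmap A0).mulVec z) z)
    (hLnn : ∀ z : Fin m → ℂ, 0 ≤ reIP ((cmap L).mulVec z) z)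
    (hLker : ∃ z : Fin m → ℂ, z ≠ 0 ∧ z ∈ kerC L)
    -- condition (K): a smooth compensating matrix family
    (K : (Fin n → ℝ) → Matrix (Fin m) (Fin m) ℝ)
    (hKsmooth : ∀ i j, ContDiff ℝ (⊤ : ℕ∞) (fun ω => K ω i j))
    (hKodd : ∀ ω : Fin n → ℝ, (∑ j, ω j ^ 2 = 1) → K (-ω) = - K ω)
    (hKA0 : ∀ ω : Fin n → ℝ, (∑ j, ω j ^ 2 = 1) → (K ω * A0)ᵀ = -(K ω * A0))
    (hKpos : ∀ ω : Fin n → ℝ, (∑ j, ω j ^ 2 = 1) → ∀ z ∈ kerC L, z ≠ 0 →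
      0 < reIP ((cmap (symP (K ω * (∑ j, ω j • A j)))).mulVec z) z) :
    ∃ C > (0:ℝ), ∃ c > (0:ℝ), ∀ r : ℝ, 0 ≤ r → ∀ ω : Fin n → ℝ, (∑ j, ω j ^ 2 = 1) →
      ∀ u u' : ℝ → (Fin m → ℂ),
      (∀ t : ℝ, 0 ≤ t → HasDerivWithinAt u (u' t) (Set.Ici 0) t) →
      (∀ t : ℝ, 0 ≤ t →
        (cmap A0).mulVec (u' t)
          + ((r : ℂ) * Complex.I) • (cmap (∑ j, ω j • A j)).mulVec (u t)
          + (cmap L).mulVec (u t) = 0) →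
      ∀ t : ℝ, 0 ≤ t →
        cnrm (u t) ≤ C * Real.exp (-(c * (r ^ 2 / (1 + r ^ 2)) * t)) * cnrm (u 0) := by
  have hKc : Continuous K := continuous_matrix fun i j => (hKsmooth i j).continuous
  have hAs : ∀ ω : Fin n → ℝ, (∑ j, ω j • A j)ᵀ = ∑ j, ω j • A j := by
    intro ω
    rw [transpose_sum]
    exact Finset.sum_congr rfl fun j _ => by rw [transpose_smul, hAsym]
  have hAc : Continuous fun ω : Fin n → ℝ => ∑ j, ω j • A j := by fun_prop
  -- the forms
  let q : (Fin n → ℝ) × (Fin m → ℂ) → ℝ := fun x => reIP (cmap A0 *ᵥ x.2) x.2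
  let l : (Fin n → ℝ) × (Fin m → ℂ) → ℝ := fun x => reIP (cmap L *ᵥ x.2) x.2
  let p : (Fin n → ℝ) × (Fin m → ℂ) → ℝ := fun x =>
    reIP (cmap (K x.1 * ∑ j, x.1 j • A j) *ᵥ x.2) x.2
  let h : (Fin n → ℝ) × (Fin m → ℂ) → ℝ := fun x =>
    reIP ((Complex.I • cmap (K x.1 * A0)) *ᵥ x.2) x.2
  let w : (Fin n → ℝ) × (Fin m → ℂ) → (Fin m → ℂ) := fun x =>
    -(Complex.I • cmap (K x.1)ᵀ *ᵥ x.2)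
  let b : (Fin n → ℝ) × (Fin m → ℂ) → ℝ := fun x => reIP (cmap L *ᵥ w x) (w x)
  have hK1 : Continuous fun x : (Fin n → ℝ) × (Fin m → ℂ) => K x.1 := hKc.comp continuous_fst
  have hA1 : Continuous fun x : (Fin n → ℝ) × (Fin m → ℂ) => ∑ j, x.1 j • A j :=
    hAc.comp continuous_fst
  have qc : Continuous q :=
    continuous_reIP (continuous_const.matrix_mulVec continuous_snd) continuous_snd
  have lc : Continuous l :=
    continuous_reIP (continuous_const.matrix_mulVec continuous_snd) continuous_snd
  have pc : Continuous p :=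
    continuous_reIP ((continuous_cmap (hK1.matrix_mul hA1)).matrix_mulVec continuous_snd)
      continuous_snd
  have hc : Continuous h :=
    continuous_reIP (((continuous_cmap (hK1.matrix_mul continuous_const)).const_smul
      Complex.I).matrix_mulVec continuous_snd) continuous_snd
  have wc : Continuous w :=
    (((continuous_cmap hK1.matrix_transpose).matrix_mulVec continuous_snd).const_smul
      Complex.I).neg
  have bc : Continuous b := continuous_reIP (continuous_const.matrix_mulVec wc) wc
  have wh : ∀ ω z (c : ℝ), w (ω, (c : ℂ) • z) = (c : ℂ) • w (ω, z) := by
    intro ω z c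
    simp only [w]
    rw [mulVec_smul, smul_comm, smul_neg]
  have hne : ∀ x ∈ SS n m, x.2 ≠ 0 := by
    intro x hx h0
    have := hx.2
    rw [(nsq_zero_iff _).2 h0] at this
    exact zero_ne_one this
  obtain ⟨e0, he0, hq0⟩ := lower q (fun ω z c => form_homog _ z c) qc
    (fun x hx => hA0pos _ (hne x hx))
  obtain ⟨B1, hB1, hq1⟩ := upper q (fun ω z c => form_homog _ z c) qc
  obtain ⟨B2, hB2, hh1⟩ := upper h (fun ω z c => form_homog _ z c) hc
  obtain ⟨B3, hB3, hb1⟩ := upper b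
    (fun ω z c => by simp only [b]; rw [wh]; exact form_homog _ _ c) bc
  obtain ⟨M, hM⟩ := combine p l pc lc (fun x => hLnn _) (by
    intro x hx h0
    have := hKpos x.1 hx.1 x.2 (ker_of_zero L hLsym hLnn _ h0) (hne x hx)
    rw [reIP_symP] at this
    exact this)
  obtain ⟨κ, hκ, hp1⟩ := lower (fun x => p x + M * l x)
    (fun ω z c => by
      have e1 : p (ω, (c : ℂ) • z) = c ^ 2 * p (ω, z) := form_homog _ z c
      have e2 : l (ω, (c : ℂ) • z) = c ^ 2 * l (ω, z) := form_homog _ z c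
      simp only [e1, e2]; ring) (pc.add (continuous_const.mul lc)) hM
  set B := B1 + B2 + B3 with hBdef
  have hB : 0 < B := by positivity
  have hM0 : (0 : ℝ) ≤ M := Nat.cast_nonneg M
  have hD : 0 < 2 * (M : ℝ) + B / κ := by positivity
  obtain ⟨δ, hδ, hδ1, hδ2, hδ3⟩ : ∃ δ : ℝ, 0 < δ ∧ δ ≤ 1 ∧ δ * B ≤ e0 / 2 ∧
      δ * (2 * M + B / κ) ≤ 2 := by
    refine ⟨min 1 (min (e0 / 2 / B) (2 / (2 * M + B / κ))), by positivity, min_le_left _ _, ?_, ?_⟩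
    · rw [← le_div_iff₀ hB]
      exact (min_le_right _ _).trans (min_le_left _ _)
    · rw [← le_div_iff₀ hD]
      exact (min_le_right _ _).trans (min_le_right _ _)
  have hfin : ∀ r : ℝ, 0 ≤ r → ∀ ω : Fin n → ℝ, (∑ j, ω j ^ 2 = 1) → ∀ z : Fin m → ℂ, _ :=
    fun r hr ω hω z => arith (s := nsq z) (l := l (ω, z)) (p := p (ω, z))
      (g := reIP (cmap L *ᵥ z) (w (ω, z))) (h := h (ω, z)) (q0 := q (ω, z)) (r := r) (δ := δ)
      (M := M) (κ := κ) (B := B) (e0 := e0) (nsq_nonneg z) (hLnn z) hκ hB hδ hδ1 hM0 hδ2 hδ3 hr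
      (hp1 ω hω z)
      ((cs L hLsym hLnn z (w (ω, z))).trans (mul_le_mul_of_nonneg_left
        (((le_abs_self _).trans (hb1 ω hω z)).trans
          (mul_le_mul_of_nonneg_right (by linarith) (nsq_nonneg z))) (hLnn z)))
      ((hh1 ω hω z).trans (mul_le_mul_of_nonneg_right (by linarith) (nsq_nonneg z)))
      (hq0 ω hω z)
      (((le_abs_self _).trans (hq1 ω hω z)).trans
          (mul_le_mul_of_nonneg_right (by linarith) (nsq_nonneg z)))
  refine ⟨√(4 * B / e0), by positivity, δ * κ / (2 * B) / 2, by positivity, ?_⟩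
  intro r hr ω hω u u' hu heq t ht
  have huat : ∀ t, 0 < t → HasDerivAt u (u' t) t := fun t ht =>
    (hu t ht.le).hasDerivAt (Ici_mem_nhds ht)
  have huc : ContinuousOn u (Set.Ici 0) := fun t ht => (hu t ht).continuousWithinAt
  have hpair : ContinuousOn (fun s => (ω, u s)) (Set.Ici 0) := continuousOn_const.prodMk huc
  have hd1 : ∀ s, 0 < s → HasDerivAt (fun s => q (ω, u s)) (-2 * l (ω, u s)) s := by
    intro s hs
    have e := deriv_form (cmap A0) u (u' s) s (huat s hs)
    rw [energy1 A0 _ L hA0sym (hAs ω) r (u s) (u' s) (heq s hs.le)] at e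
    exact e
  have hd2 : ∀ s, 0 < s → HasDerivAt (fun s => h (ω, u s))
      (2 * r * p (ω, u s) - 2 * reIP (cmap L *ᵥ u s) (w (ω, u s))) s := by
    intro s hs
    have e := deriv_form (Complex.I • cmap (K ω * A0)) u (u' s) s (huat s hs)
    rw [energy2 A0 _ L (K ω) (hKA0 ω hω) r (u s) (u' s) (heq s hs.le)] at e
    exact e
  have hcont : ContinuousOn (fun s => q (ω, u s) - δ * (r / (1 + r ^ 2)) * h (ω, u s))
      (Set.Ici 0) :=
    (qc.comp_continuousOn hpair).sub (continuousOn_const.mul (hc.comp_continuousOn hpair))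
  have hg := gronwall (k := δ * κ / (2 * B) * (r ^ 2 / (1 + r ^ 2))) hcont
    (fun s hs => (hd1 s hs).fun_sub ((hd2 s hs).const_mul (δ * (r / (1 + r ^ 2)))))
    (fun s hs => (hfin r hr ω hω (u s)).2.2) t ht
  have h1 := (hfin r hr ω hω (u t)).1
  have h2 := (hfin r hr ω hω (u 0)).2.1
  set k := δ * κ / (2 * B) * (r ^ 2 / (1 + r ^ 2)) with hk
  have h3 : nsq (u t) ≤ (4 * B / e0) * (Real.exp (-(k * t)) * nsq (u 0)) := by
    have h4 := (h1.trans hg).trans (mul_le_mul_of_nonneg_left h2 (Real.exp_pos _).le)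
    rw [div_mul_eq_mul_div, le_div_iff₀ he0]
    linarith
  show √(nsq (u t)) ≤ _ * √(nsq (u 0))
  refine (Real.sqrt_le_sqrt h3).trans (le_of_eq ?_)
  rw [Real.sqrt_mul (by positivity), Real.sqrt_mul (Real.exp_pos _).le, ← Real.exp_half, ← mul_assoc]
  have hexp : -(k * t) / 2 = -(δ * κ / (2 * B) / 2 * (r ^ 2 / (1 + r ^ 2)) * t) := by
    rw [hk]; ring
  rw [hexp]
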